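/- Let U be a squared four-dimensional Bessel process started at 0, τ₁^U := inf{ t ≥ 0 : Ū(t) − U(t) ≥ 1 } with Ū(t) := sup_{s ∈ [0,t]} U(s), and A(t) := ∫₀^t U(s) ds. There exists a constant c > 0 such that for all b ≥ 4, P{ A(τ₁^U) ≥ b } ≤ exp(−c b^{1/5}). -/

import Mathlib

open MeasureTheory ProbabilityTheory Real Set Filter

noncomputable section

variable {Ω : Type*} [MeasurableSpace Ω]

/-- A standard one-dimensional Brownian motion (indexed by `ℝ`, with the relevant
properties required for nonnegative times): starts at `0`, has continuous paths,
independent increments, and Gaussian increments of variance `t - s`. -/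
structure IsStdBM (P : Measure Ω) (B : ℝ → Ω → ℝ) : Prop where
  measurable : ∀ t : ℝ, Measurable (B t)
  start : ∀ ω, B 0 ω = 0
  cont : ∀ ω, Continuous fun t => B t ω
  indep : ∀ (n : ℕ) (t : Fin (n + 1) → ℝ), (∀ i, 0 ≤ t i) → Monotone t →
    iIndepFun
      (fun (i : Fin n) ω => B (t i.succ) ω - B (t i.castSucc) ω) P
  gauss : ∀ s t : ℝ, 0 ≤ s → s ≤ t →
    P.map (fun ω => B t ω - B s ω) = gaussianReal 0 (Real.toNNReal (t - s))

/-- A standard `d`-dimensional Brownian motion started at `0`: the coordinate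
processes are independent standard one-dimensional Brownian motions. -/
structure IsStdBMVec (d : ℕ) (P : Measure Ω) (B : ℝ → Ω → EuclideanSpace ℝ (Fin d)) : Prop where
  coord : ∀ i : Fin d, IsStdBM P (fun t ω => B t ω i)
  indepCoord : iIndepFun
    (fun (i : Fin d) ω => fun t : ℝ => B t ω i) P

/-- Last zero of `W` in `[0,1]`. -/
def lastZero (W : ℝ → Ω → ℝ) (ω : Ω) : ℝ := sSup {t ∈ Icc (0:ℝ) 1 | W t ω = 0}

/-- `m` is a standard Brownian meander: obtained from a Brownian motion `W` by
`m s = |W (g + s (1 - g))| / √(1 - g)`, where `g` is the last zero of `W` before time `1`. -/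
def IsBrownianMeander (P : Measure Ω) (m : ℝ → Ω → ℝ) : Prop :=
  ∃ W : ℝ → Ω → ℝ, IsStdBM P W ∧
    ∀ ω, ∀ s ∈ Icc (0:ℝ) 1,
      m s ω = |W (lastZero W ω + s * (1 - lastZero W ω)) ω| / Real.sqrt (1 - lastZero W ω)

/-- Running maximum `X̄(t) = sup_{s ∈ [0,t]} X(s)`. -/
def runMax (X : ℝ → Ω → ℝ) (t : ℝ) (ω : Ω) : ℝ := ⨆ s : Icc (0:ℝ) t, X s ω

/-- Maximal drawdown on `[0,T]` : `sup_{s ∈ [0,T]} (X̄(s) - X(s))`. -/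
def maxDDOn (X : ℝ → Ω → ℝ) (T : ℝ) (ω : Ω) : ℝ := ⨆ s : Icc (0:ℝ) T, (runMax X s ω - X s ω)

/-- Drawdown time `τ_λ^X := inf {t ≥ 0 : X̄(t) - X(t) ≥ λ}`. -/
def ddTime (lam : ℝ) (X : ℝ → Ω → ℝ) (ω : Ω) : ℝ :=
  sInf {t | 0 ≤ t ∧ lam ≤ runMax X t ω - X t ω}

/-- Three-dimensional Bessel process built from a 3-dimensional Brownian motion. -/
def bessel3 (β : ℝ → Ω → EuclideanSpace ℝ (Fin 3)) (t : ℝ) (ω : Ω) : ℝ := ‖β t ω‖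

/-- Squared four-dimensional Bessel process built from a 4-dimensional Brownian motion. -/
def sqBessel4 (γ : ℝ → Ω → EuclideanSpace ℝ (Fin 4)) (t : ℝ) (ω : Ω) : ℝ := ‖γ t ω‖ ^ 2

end

open scoped ENNReal

/-!
Fix a small time step `δ`. Whatever the position of the Brownian motion `γ`, with probability at
least some `p > 0` each coordinate first moves away from the origin and then back towards it during
two successive steps, so that `U = ‖γ‖²` drops by the required amount. As the increments are
independent, no drop occurs in `n` such rounds with probability at most `(1 - p)ⁿ`; otherwise
the drawdown time is at most `T = 2δn`. On the other hand, Jensen's inequality for the average over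
`[0, T]` and the Gaussian exponential moment of the square show that `∫₀ᵀ U ≥ b` has probability at
most `C exp (-κ b / n²)`. With `n` of order `b^{1/3}` the sum of the two bounds is at most
`exp (-c b^{1/3})` for large `b`, which is stronger than the exponent `1/5`. To cover all `b ≥ b₀`,
for a given `b₀ > 0`, one needs the sum to be smaller than `1` for `n = 1` and `b = b₀`; this
holds when `δ` is small, because `p` decays like `exp (-L / δ)` and the second bound like
`exp (-M / δ²)`.
-/

open scoped NNReal Topology

section Gaussian

lemma lintegral_exp_mul_sq_gaussianReal {v : ℝ≥0} {c : ℝ} (hc : 2 * c * v < 1) :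
    ∫⁻ x, ENNReal.ofReal (exp (c * x ^ 2)) ∂gaussianReal 0 v =
      ENNReal.ofReal (√(1 - 2 * c * v))⁻¹ := by
  rcases eq_or_ne v 0 with rfl | hv
  · simp
  set w : ℝ≥0 := v / (1 - 2 * c * v).toNNReal with hw
  have hr : 0 < 1 - 2 * c * v := by linarith
  have : (0 : ℝ) < v := by positivity
  have hwv : (w : ℝ) = v / (1 - 2 * c * v) := by rw [hw, NNReal.coe_div, coe_toNNReal _ hr.le]
  have hw0 : w ≠ 0 := div_ne_zero hv (Real.toNNReal_pos.2 hr).ne'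
  have density_mul (x : ℝ) : gaussianPDF 0 v x * ENNReal.ofReal (exp (c * x ^ 2)) =
      ENNReal.ofReal (√(1 - 2 * c * v))⁻¹ * gaussianPDF 0 w x := by
    simp only [gaussianPDF, gaussianPDFReal, hwv]
    rw [← ENNReal.ofReal_mul (by positivity), ← ENNReal.ofReal_mul (by positivity), mul_assoc,
      ← exp_add, ← mul_assoc, ← mul_inv, ← sqrt_mul hr.le]
    congr 4
    · rw [mul_div_assoc', mul_div_assoc', mul_div_cancel_left₀ _ hr.ne']
    · field_simp
      ring
  rw [gaussianReal_of_var_ne_zero _ hv,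
    lintegral_withDensity_eq_lintegral_mul _ (measurable_gaussianPDF _ _) (by fun_prop)]
  simp only [Pi.mul_apply, density_mul]
  rw [lintegral_const_mul _ (measurable_gaussianPDF _ _), lintegral_gaussianPDF_eq_one _ hw0,
    mul_one]

lemma mul_volume_le_gaussianReal {μ M : ℝ} {v : ℝ≥0} (hv : v ≠ 0) {s : Set ℝ}
    (hs : MeasurableSet s) (hM : ∀ x ∈ s, |x - μ| ≤ M) :
    ENNReal.ofReal ((√(2 * π * v))⁻¹ * exp (-M ^ 2 / (2 * v))) * volume s ≤
      gaussianReal μ v s := by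
  rw [gaussianReal_apply _ hv, ← setLIntegral_const]
  refine setLIntegral_mono' hs fun x hx => ENNReal.ofReal_le_ofReal ?_
  have : (x - μ) ^ 2 ≤ M ^ 2 := sq_le_sq.2 ((hM x hx).trans (le_abs_self M))
  rw [gaussianPDFReal]
  gcongr

end Gaussian

section ExponentialMoments

variable {Ω S : Type*} [MeasurableSpace Ω] [MeasurableSpace S]

lemma ofReal_exp_integral_le_lintegral {ν : Measure S} [IsProbabilityMeasure ν] {f : S → ℝ}
    (hf : Integrable f ν) :
    ENNReal.ofReal (exp (∫ s, f s ∂ν)) ≤ ∫⁻ s, ENNReal.ofReal (exp (f s)) ∂ν := by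
  by_cases hexp : Integrable (fun s => exp (f s)) ν
  · rw [← ofReal_integral_eq_lintegral_ofReal hexp (.of_forall fun s => (exp_pos _).le)]
    exact ENNReal.ofReal_le_ofReal <| convexOn_exp.map_integral_le continuous_exp.continuousOn
      isClosed_univ (.of_forall fun _ => mem_univ _) hf hexp
  · have hmeas : AEStronglyMeasurable (fun s => exp (f s)) ν :=
      continuous_exp.comp_aestronglyMeasurable hf.aestronglyMeasurable
    rw [← lintegral_ofReal_ne_top_iff_integrable hmeas (.of_forall fun s => (exp_pos _).le),
      not_not] at hexp
    exact hexp ▸ le_top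

lemma measure_le_integral_le_of_lintegral_exp_le {P : Measure Ω} [SFinite P] {ν : Measure S}
    [IsProbabilityMeasure ν] {X : S → Ω → ℝ} (hX : Measurable (Function.uncurry X))
    (hint : ∀ ω, Integrable (fun s => X s ω) ν) {K : ℝ≥0∞}
    (hK : ∀ᵐ s ∂ν, ∫⁻ ω, ENNReal.ofReal (exp (X s ω)) ∂P ≤ K) (b : ℝ) :
    P {ω | b ≤ ∫ s, X s ω ∂ν} ≤ ENNReal.ofReal (exp (-b)) * K := by
  have hXexp : Measurable fun p : Ω × S => ENNReal.ofReal (exp (X p.2 p.1)) :=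
    (measurable_exp.comp (hX.comp measurable_swap)).ennreal_ofReal
  have markov : ENNReal.ofReal (exp b) * P {ω | b ≤ ∫ s, X s ω ∂ν} ≤ K := calc
    _ ≤ ENNReal.ofReal (exp b) *
        P {ω | ENNReal.ofReal (exp b) ≤ ∫⁻ s, ENNReal.ofReal (exp (X s ω)) ∂ν} := by
      gcongr with ω
      exact fun hω => (ENNReal.ofReal_le_ofReal (exp_le_exp.2 hω)).trans
        (ofReal_exp_integral_le_lintegral (hint ω))
    _ ≤ ∫⁻ ω, ∫⁻ s, ENNReal.ofReal (exp (X s ω)) ∂ν ∂P :=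
      mul_meas_ge_le_lintegral hXexp.lintegral_prod_right' _
    _ = ∫⁻ s, ∫⁻ ω, ENNReal.ofReal (exp (X s ω)) ∂P ∂ν :=
      lintegral_lintegral_swap hXexp.aemeasurable
    _ ≤ ∫⁻ _, K ∂ν := lintegral_mono_ae hK
    _ = K := by simp
  calc
    _ = ENNReal.ofReal (exp (-b)) *
        (ENNReal.ofReal (exp b) * P {ω | b ≤ ∫ s, X s ω ∂ν}) := by
      rw [← mul_assoc, ← ENNReal.ofReal_mul (exp_pos _).le, ← exp_add, neg_add_cancel, exp_zero,
        ENNReal.ofReal_one, one_mul]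
    _ ≤ _ := by gcongr

end ExponentialMoments

section Independence

lemma measurable_of_recursion {Ω α β : Type*} [MeasurableSpace α] [MeasurableSpace β]
    {past : ℕ → MeasurableSpace Ω} (past_mono : Monotone past) {η : ℕ → Ω → β}
    (hη : ∀ n, Measurable[past (n + 1)] (η n)) {f : α × β → α} (hf : Measurable f) {X : ℕ → Ω → α}
    {x₀ : α} (hX₀ : ∀ ω, X 0 ω = x₀) (hX : ∀ n ω, X (n + 1) ω = f (X n ω, η n ω)) (n : ℕ) :
    Measurable[past n] (X n) := by
  induction n with
  | zero => exact (funext hX₀ : X 0 = fun _ => x₀) ▸ measurable_const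
  | succ n ih =>
    rw [funext (hX n)]
    exact hf.comp ((ih.mono (past_mono n.le_succ) le_rfl).prodMk (hη n))

variable {Ω : Type*} [MeasurableSpace Ω] {P : Measure Ω}

lemma iIndepFun_curry {ι κ β : Type*} [MeasurableSpace β] {X : ι × κ → Ω → β}
    (hX : ∀ p, Measurable (X p)) (h : iIndepFun X P) :
    iIndepFun (fun i ω j => X (i, j) ω) P := by
  have := h.isProbabilityMeasure
  have (p : ι × κ) : IsProbabilityMeasure (P.map (X p)) :=
    Measure.isProbabilityMeasure_map (hX p).aemeasurable
  have map_row (i : ι) : P.map (fun ω j => X (i, j) ω) =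
      Measure.infinitePi fun j => P.map (X (i, j)) :=
    (h.precomp (Prod.mk_right_injective i)).map_fun_eq_infinitePi_map fun j => hX (i, j)
  rw [iIndepFun_iff_map_fun_eq_infinitePi_map fun i => by fun_prop]
  simp only [map_row]
  rw [← Measure.infinitePi_map_curry fun i j => P.map (X (i, j)),
    ← h.map_fun_eq_infinitePi_map hX, Measure.map_map (by fun_prop) (by fun_prop)]
  rfl

lemma iIndepFun_prodMk_two_mul {β : Type*} [MeasurableSpace β] {ξ : ℕ → Ω → β}
    (hξ : ∀ n, Measurable (ξ n)) (h : iIndepFun ξ P) :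
    iIndepFun (fun k ω => (ξ (2 * k) ω, ξ (2 * k + 1) ω)) P := by
  have hinj : Function.Injective fun p : ℕ × Fin 2 => 2 * p.1 + p.2 := by
    rintro ⟨k, i⟩ ⟨l, j⟩ h
    simp only [Prod.mk.injEq, Fin.ext_iff] at h ⊢
    lia
  exact (iIndepFun_curry (fun p => hξ _) (h.precomp hinj)).comp
    (fun _ v => (v 0, v 1)) fun _ => by fun_prop

variable {α β : Type*} [MeasurableSpace α] [MeasurableSpace β]

lemma measure_preimage_inter_prodMk_mem_le [IsFiniteMeasure P] {U : Ω → α} {Y : Ω → β}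
    (hU : Measurable U) (hY : Measurable Y) (h : IndepFun U Y P) {A : Set α}
    (hA : MeasurableSet A) {E : Set (α × β)} (hE : MeasurableSet E) {q : ℝ≥0∞}
    (hq : ∀ u ∈ A, P {ω | (u, Y ω) ∈ E} ≤ q) :
    P (U ⁻¹' A ∩ {ω | (U ω, Y ω) ∈ E}) ≤ q * P (U ⁻¹' A) := by
  calc
    _ = P.map (fun ω => (U ω, Y ω)) (Prod.fst ⁻¹' A ∩ E) := by
      rw [Measure.map_apply (by fun_prop) ((measurable_fst hA).inter hE)]
      rfl
    _ = ∫⁻ u, P.map Y (Prod.mk u ⁻¹' (Prod.fst ⁻¹' A ∩ E)) ∂P.map U := by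
      rw [h.map_prod_eq_prod_map_map hU.aemeasurable hY.aemeasurable,
        Measure.prod_apply ((measurable_fst hA).inter hE)]
    _ ≤ ∫⁻ u, A.indicator (fun _ => q) u ∂P.map U := by
      refine lintegral_mono fun u => ?_
      by_cases hu : u ∈ A
      · rw [indicator_of_mem hu, Measure.map_apply hY (measurable_prodMk_left
          ((measurable_fst hA).inter hE))]
        exact (measure_mono fun ω hω => hω.2).trans (hq u hu)
      · have : Prod.mk u ⁻¹' (Prod.fst ⁻¹' A ∩ E) = ∅ := by ext; simp [hu]
        simp [this]
    _ = q * P (U ⁻¹' A) := by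
      rw [lintegral_indicator_const hA, Measure.map_apply hU hA]

lemma measure_forall_lt_mem_le_pow {η : ℕ → Ω → β} (hη : ∀ n, Measurable (η n))
    (h : iIndepFun η P) {f : α × β → α} (hf : Measurable f) {X : ℕ → Ω → α} {x₀ : α}
    (hX₀ : ∀ ω, X 0 ω = x₀) (hX : ∀ n ω, X (n + 1) ω = f (X n ω, η n ω)) {E : Set (α × β)}
    (hE : MeasurableSet E) {q : ℝ≥0∞} (hq : ∀ n x, P {ω | (x, η n ω) ∈ E} ≤ q) (n : ℕ) :
    P {ω | ∀ k < n, (X k ω, η k ω) ∈ E} ≤ q ^ n := by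
  have := h.isProbabilityMeasure
  let past (n : ℕ) : MeasurableSpace Ω := ⨆ j ∈ Iio n, .comap (η j) ‹_›
  have past_le (n : ℕ) : past n ≤ ‹MeasurableSpace Ω› := iSup₂_le fun j _ => (hη j).comap_le
  have past_mono : Monotone past := fun m n hmn => biSup_mono fun j hj => lt_of_lt_of_le hj hmn
  have hη_past {k n : ℕ} (hkn : k < n) : Measurable[past n] (η k) :=
    Measurable.of_comap_le (le_iSup₂_of_le k hkn le_rfl)
  have hX_past (n : ℕ) : Measurable[past n] (X n) :=
    measurable_of_recursion past_mono (fun k => hη_past k.lt_succ_self) hf hX₀ hX n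
  have hsurvive (n : ℕ) : MeasurableSet[past n] {ω | ∀ k < n, (X k ω, η k ω) ∈ E} := by
    simp only [ofPred_forall]
    exact .iInter fun k => .iInter fun hk =>
      ((hX_past k).mono (past_mono hk.le) le_rfl).prodMk (hη_past hk) hE
  induction n with
  | zero => simp
  | succ n ih =>
    -- The survival event is carried as a `Prop`-valued coordinate, independent of `η n` together
    -- with `X n`.
    let U (ω : Ω) : α × Prop := (X n ω, ∀ k < n, (X k ω, η k ω) ∈ E)
    have hU : Measurable[past n] U :=
      (hX_past n).prodMk (@measurableSet_setOfPred _ (past n) _ |>.1 (hsurvive n))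
    have hUη : IndepFun U (η n) P := by
      have hindep := indep_iSup_of_disjoint (fun j => (hη j).comap_le) h
        (disjoint_singleton_right.2 (notMem_Iio.2 le_rfl) : Disjoint (Iio n) {n})
      rw [iSup_singleton] at hindep
      exact indep_of_indep_of_le_left hindep hU.comap_le
    calc
      _ ≤ P (U ⁻¹' {u | u.2} ∩ {ω | (U ω, η n ω) ∈ {p : (α × Prop) × β | (p.1.1, p.2) ∈ E}}) :=
        measure_mono fun ω (hω : ∀ k < n + 1, _) =>
          ⟨fun k hk => hω k (hk.trans n.lt_succ_self), hω n n.lt_succ_self⟩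
      _ ≤ q * P (U ⁻¹' {u | u.2}) :=
        measure_preimage_inter_prodMk_mem_le (hU.mono (past_le n) le_rfl) (hη n) hUη
          (measurableSet_setOfPred.2 measurable_snd)
          ((measurable_fst.fst.prodMk measurable_snd) hE) fun u _ => hq n u.1
      _ ≤ q ^ (n + 1) := by
        rw [pow_succ']
        gcongr
        exact ih

end Independence

section Drop

lemma exists_Icc_le_sq_sub_sq {a : ℝ} (ha : 0 ≤ a) (x : ℝ) :
    ∃ y ∈ Icc (-(2 * a)) (3 / 2 * a), ∃ z ∈ Icc (-(2 * a)) (3 / 2 * a),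
      ∀ u ∈ Icc y (y + a / 2), ∀ v ∈ Icc z (z + a / 2),
        a ^ 2 / 2 ≤ (x + u) ^ 2 - (x + u + v) ^ 2 := by
  rcases le_total 0 x with hx | hx
  · refine ⟨a, ⟨by linarith, by linarith⟩, -a, ⟨by linarith, by linarith⟩, ?_⟩
    rintro u ⟨hu, -⟩ v ⟨hv, hv'⟩
    nlinarith
  · refine ⟨-(2 * a), ⟨by linarith, by linarith⟩, a / 2, ⟨by linarith, by linarith⟩, ?_⟩
    rintro u ⟨-, hu⟩ v ⟨hv, hv'⟩
    nlinarith

lemma exists_forall_Icc_le_norm_sq_sub_norm_sq {d : ℕ} [NeZero d] {a : ℝ} (ha : 0 ≤ a)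
    (x : EuclideanSpace ℝ (Fin d)) :
    ∃ y z : Fin d → ℝ, (∀ i, y i ∈ Icc (-(2 * a)) (3 / 2 * a)) ∧
      (∀ i, z i ∈ Icc (-(2 * a)) (3 / 2 * a)) ∧
      ∀ u v : EuclideanSpace ℝ (Fin d), (∀ i, u i ∈ Icc (y i) (y i + a / 2)) →
        (∀ i, v i ∈ Icc (z i) (z i + a / 2)) → a ^ 2 / 2 ≤ ‖x + u‖ ^ 2 - ‖x + u + v‖ ^ 2 := by
  choose y hy z hz hdrop using fun i => exists_Icc_le_sq_sub_sq ha (x i)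
  refine ⟨y, z, hy, hz, fun u v hu hv => ?_⟩
  have hd : (1 : ℝ) ≤ d := Nat.one_le_cast.2 NeZero.one_le
  calc
    a ^ 2 / 2 ≤ ∑ _i : Fin d, a ^ 2 / 2 := by
      simp only [Finset.sum_const, Finset.card_univ, Fintype.card_fin, nsmul_eq_mul]
      exact le_mul_of_one_le_left (by positivity) hd
    _ ≤ ∑ i, ((x i + u i) ^ 2 - (x i + u i + v i) ^ 2) :=
      Finset.sum_le_sum fun i _ => hdrop i _ (hu i) _ (hv i)
    _ = _ := by simp [EuclideanSpace.real_norm_sq_eq]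

lemma ofReal_le_gaussianReal_Icc {a : ℝ} {v : ℝ≥0} (hv : v ≠ 0)
    (hv' : 2 * π * v ≤ 1) {y : ℝ} (hy : y ∈ Icc (-(2 * a)) (3 / 2 * a)) :
    ENNReal.ofReal (a / 2 * exp (-(2 * a ^ 2 / v))) ≤ gaussianReal 0 v (Icc y (y + a / 2)) := by
  have hbound : ∀ x ∈ Icc y (y + a / 2), |x - 0| ≤ 2 * a := fun x hx => by
    rw [sub_zero, abs_le]
    exact ⟨hy.1.trans hx.1, by linarith [hx.2, hy.2]⟩
  have hsqrt : 1 ≤ (√(2 * π * v))⁻¹ :=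
    (one_le_inv₀ (by positivity)).2 (sqrt_le_one.2 hv')
  calc
    _ = ENNReal.ofReal (1 * exp (-(2 * a) ^ 2 / (2 * v))) * volume (Icc y (y + a / 2)) := by
      rw [volume_Icc, add_sub_cancel_left, ← ENNReal.ofReal_mul (by positivity), one_mul, mul_comm]
      ring_nf
    _ ≤ _ := by gcongr
    _ ≤ _ := mul_volume_le_gaussianReal hv measurableSet_Icc hbound

/-- A lower bound, for `2πδ ≤ 1`, on the probability that the squared norm of a `d`-dimensional
Brownian motion, started anywhere and run for two time steps of length `δ`, drops by `lam` during
the second step. Each of the `2 * d` coordinate increments is asked to lie in an interval of length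
`√(lam / 2)`, on which the density of `N(0, δ)` is at least `exp (-(4 * lam / δ))`. -/
noncomputable def dropProbBound (d : ℕ) (lam δ : ℝ) : ℝ :=
  (√(lam / 2) * exp (-(4 * lam / δ))) ^ (2 * d)

lemma dropProbBound_nonneg (d : ℕ) (lam δ : ℝ) : 0 ≤ dropProbBound d lam δ := by
  unfold dropProbBound
  positivity

end Drop

section Optimization

lemma eventually_mul_exp_neg_mul_sq_lt {K α : ℝ} (C L : ℝ) (hα : 0 < α) (hK : 0 < K) :
    ∀ᶠ r in atTop, C * exp (-(α * r ^ 2)) < K * exp (-(L * r)) := by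
  have hexponent : Tendsto (fun r : ℝ => r * (L - α * r)) atTop atBot :=
    tendsto_id.atTop_mul_atBot₀ <| tendsto_atBot_add_const_left _ _ <|
      tendsto_neg_atTop_atBot.comp (tendsto_id.const_mul_atTop hα)
  have hlim : Tendsto (fun r => C * exp (r * (L - α * r))) atTop (𝓝 0) := by
    simpa using (tendsto_exp_atBot.comp hexponent).const_mul C
  filter_upwards [hlim.eventually_lt_const hK] with r hr
  calc
    _ = C * exp (r * (L - α * r)) * exp (-(L * r)) := by
      rw [mul_assoc, ← exp_add]
      ring_nf
    _ < _ := by gcongr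

lemma pow_ceil_add_mul_exp_le {q C κ x : ℝ} (hq : 0 ≤ q) (hq' : q ≤ 1) (hC : 0 ≤ C) (hκ : 0 ≤ κ)
    (hx : 1 ≤ x) :
    q ^ ⌈x⌉₊ + C * exp (-(κ * x ^ 3 / ⌈x⌉₊ ^ 2)) ≤ (1 + C) * exp (-(min (1 - q) (κ / 4) * x)) := by
  have hx_le : x ≤ ⌈x⌉₊ := Nat.le_ceil x
  have hle_two_mul : (⌈x⌉₊ : ℝ) ≤ 2 * x :=
    (Nat.ceil_lt_add_one (by linarith)).le.trans (by linarith)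
  have hpow : q ^ ⌈x⌉₊ ≤ exp (-(min (1 - q) (κ / 4) * x)) := calc
    q ^ ⌈x⌉₊ ≤ exp (-(1 - q)) ^ ⌈x⌉₊ := by
      gcongr
      linarith [add_one_le_exp (-(1 - q))]
    _ = exp (-((1 - q) * ⌈x⌉₊)) := by
      rw [← exp_nat_mul]
      ring_nf
    _ ≤ _ := by
      have := sub_nonneg.2 hq'
      gcongr
      exact min_le_left _ _
  have hexp : exp (-(κ * x ^ 3 / ⌈x⌉₊ ^ 2)) ≤ exp (-(min (1 - q) (κ / 4) * x)) := by
    gcongr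
    calc
      min (1 - q) (κ / 4) * x ≤ κ / 4 * x := by gcongr; exact min_le_right _ _
      _ = κ * x ^ 3 / (2 * x) ^ 2 := by field_simp; ring
      _ ≤ _ := by gcongr
  linarith [mul_le_mul_of_nonneg_left hexp hC]

lemma exists_exp_le_exp_neg_mul_or {m η : ℝ} (A : ℝ) (hm : 0 < m) (hη : 0 < η) :
    ∃ c > 0, ∀ x, 0 ≤ x →
      exp (-η) ≤ exp (-c * x) ∨ 1 ≤ x ∧ A * exp (-(m * x)) ≤ exp (-c * x) := by
  set x₀ := max 1 (2 * A / m)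
  have hx₀ : 0 < x₀ := one_pos.trans_le (le_max_left _ _)
  refine ⟨min (m / 2) (η / x₀), lt_min (by positivity) (by positivity), fun x hx => ?_⟩
  rcases le_total x x₀ with hsmall | hlarge
  · left
    rw [exp_le_exp, neg_mul, neg_le_neg_iff]
    calc
      _ ≤ η / x₀ * x₀ := by gcongr; exact min_le_right _ _
      _ = η := div_mul_cancel₀ _ hx₀.ne'
  · have hA : A ≤ m / 2 * x := by
      have := (div_le_iff₀ hm).1 ((le_max_right 1 (2 * A / m)).trans hlarge)
      linarith
    refine .inr ⟨(le_max_left _ _).trans hlarge, ?_⟩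
    calc
      _ ≤ exp (m / 2 * x) * exp (-(m * x)) := by
        gcongr
        linarith [add_one_le_exp (m / 2 * x)]
      _ = exp (-(m / 2) * x) := by
        rw [← exp_add]
        ring_nf
      _ ≤ _ := by gcongr; exact min_le_left _ _

/-- For large `b` the choice `n = ⌈b ^ (1 / 3)⌉` balances the two terms; for the remaining `b` the
choice `n = 1` bounds the sum by a constant smaller than `1`. -/
lemma exists_pow_add_mul_exp_le_exp_neg_rpow {q C κ b₀ : ℝ} (hq : 0 ≤ q) (hC : 0 ≤ C) (hκ : 0 < κ)
    (hb₀ : 0 ≤ b₀) (h : q + C * exp (-(κ * b₀)) < 1) :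
    ∃ c > 0, ∀ b ≥ b₀, ∃ n : ℕ, n ≠ 0 ∧
      q ^ n + C * exp (-(κ * b / n ^ 2)) ≤ exp (-c * b ^ (1 / 3 : ℝ)) := by
  have hq' : q < 1 := by linarith [mul_nonneg hC (exp_pos (-(κ * b₀))).le]
  obtain ⟨c, hc, hregimes⟩ := exists_exp_le_exp_neg_mul_or (1 + C)
    (lt_min (sub_pos.2 hq') (by positivity) : 0 < min (1 - q) (κ / 4)) (sub_pos.2 h)
  refine ⟨c, hc, fun b hb => ?_⟩
  have hb_nonneg : 0 ≤ b := hb₀.trans hb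
  have hcube : (b ^ (1 / 3 : ℝ)) ^ 3 = b := by
    rw [← rpow_natCast, ← rpow_mul hb_nonneg]
    norm_num
  rcases hregimes _ (rpow_nonneg hb_nonneg (1 / 3)) with hsmall | ⟨hone_le, hlarge⟩
  · refine ⟨1, one_ne_zero, le_trans ?_ hsmall⟩
    calc
      _ ≤ q + C * exp (-(κ * b₀)) := by
        simp only [pow_one, Nat.cast_one, one_pow, div_one]
        gcongr
      _ ≤ _ := by linarith [add_one_le_exp (-(1 - (q + C * exp (-(κ * b₀)))))]
  · refine ⟨⌈b ^ (1 / 3 : ℝ)⌉₊, (Nat.ceil_pos.2 (by linarith)).ne', le_trans ?_ hlarge⟩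
    simpa only [hcube] using pow_ceil_add_mul_exp_le hq hq'.le hC hκ.le hone_le

lemma exists_mul_exp_lt_dropProbBound {d : ℕ} [NeZero d] {lam b : ℝ} (hlam : 0 < lam) (hb : 0 < b)
    (C : ℝ) :
    ∃ δ > 0, 2 * π * δ ≤ 1 ∧ C * exp (-(b / (16 * d * δ ^ 2))) < dropProbBound d lam δ := by
  have hd : (0 : ℝ) < d := Nat.cast_pos.2 (NeZero.pos d)
  have hlarge := eventually_mul_exp_neg_mul_sq_lt C (8 * d * lam)
    (by positivity : 0 < b / (16 * d)) (by positivity : 0 < √(lam / 2) ^ (2 * d))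
  obtain ⟨r, hr, hr_pi⟩ := (hlarge.and (eventually_ge_atTop (2 * π))).exists
  have hr_pos : 0 < r := two_pi_pos.trans_le hr_pi
  refine ⟨r⁻¹, inv_pos.2 hr_pos, by rwa [← div_eq_mul_inv, div_le_one hr_pos], ?_⟩
  convert hr using 1
  · rw [inv_pow, ← div_div, div_inv_eq_mul]
  · rw [dropProbBound, mul_pow, ← exp_nat_mul]
    simp only [div_inv_eq_mul]
    push_cast
    ring_nf

end Optimization

section Drawdown

variable {Ω : Type*} {X : ℝ → Ω → ℝ} {lam : ℝ} {ω : Ω}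

lemma ddTime_nonneg : 0 ≤ ddTime lam X ω := Real.sInf_nonneg fun _ ht => ht.1

lemma ddTime_le_of_le_sub (hX : Continuous fun t => X t ω) {s t : ℝ} (hs : 0 ≤ s) (hst : s ≤ t)
    (h : lam ≤ X s ω - X t ω) : ddTime lam X ω ≤ t := by
  have hbdd : BddAbove (range fun r : Icc 0 t => X r ω) :=
    (isCompact_range (hX.comp continuous_subtype_val)).bddAbove
  have hmax : X s ω ≤ runMax X t ω := le_ciSup hbdd ⟨s, hs, hst⟩
  exact csInf_le ⟨0, fun _ hr => hr.1⟩ ⟨hs.trans hst, by linarith⟩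

end Drawdown

/-- The squared Bessel process of integer dimension `d` built from a `d`-dimensional Brownian
motion. -/
noncomputable def sqBessel {Ω : Type*} {d : ℕ} (γ : ℝ → Ω → EuclideanSpace ℝ (Fin d)) (t : ℝ)
    (ω : Ω) : ℝ := ‖γ t ω‖ ^ 2

namespace IsStdBM

variable {Ω : Type*} [MeasurableSpace Ω] {P : Measure Ω} {B : ℝ → Ω → ℝ}

lemma isProbabilityMeasure (hB : IsStdBM P B) : IsProbabilityMeasure P := by
  have : IsProbabilityMeasure (P.map fun ω => B 0 ω - B 0 ω) := by
    rw [hB.gauss 0 0 le_rfl le_rfl]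
    infer_instance
  exact Measure.isProbabilityMeasure_of_map (fun ω => B 0 ω - B 0 ω)

lemma map_eq_gaussianReal (hB : IsStdBM P B) {t : ℝ} (ht : 0 ≤ t) :
    P.map (B t) = gaussianReal 0 t.toNNReal := by
  simpa [hB.start] using hB.gauss 0 t le_rfl ht

lemma lintegral_exp_mul_sq_le (hB : IsStdBM P B) {T s : ℝ} (hs : s ∈ Ioc 0 T) :
    ∫⁻ ω, ENNReal.ofReal (exp (B s ω ^ 2 / (4 * T))) ∂P ≤ ENNReal.ofReal √2 := by
  have hT : 0 < T := hs.1.trans_le hs.2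
  have hsT : 2 * (4 * T)⁻¹ * (s.toNNReal : ℝ) ≤ 1 / 2 := by
    rw [coe_toNNReal _ hs.1.le]
    field_simp
    linarith [hs.2]
  calc
    _ = ∫⁻ x, ENNReal.ofReal (exp ((4 * T)⁻¹ * x ^ 2)) ∂gaussianReal 0 s.toNNReal := by
      rw [← hB.map_eq_gaussianReal hs.1.le, lintegral_map (by fun_prop) (hB.measurable s)]
      simp only [div_eq_inv_mul]
    _ = ENNReal.ofReal (√(1 - 2 * (4 * T)⁻¹ * s.toNNReal))⁻¹ :=
      lintegral_exp_mul_sq_gaussianReal (by linarith)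
    _ ≤ ENNReal.ofReal √2 := by
      rw [← sqrt_inv]
      gcongr
      rw [inv_le_comm₀ (by linarith) two_pos]
      linarith

lemma measure_le_integral_sq_le (hB : IsStdBM P B) {T : ℝ} (hT : 0 < T) (b : ℝ) :
    P {ω | b ≤ ∫ s in (0 : ℝ)..T, B s ω ^ 2} ≤
      ENNReal.ofReal (√2 * exp (-(b / (4 * T ^ 2)))) := by
  have := hB.isProbabilityMeasure
  have : IsProbabilityMeasure (volume[|Ioc 0 T]) :=
    cond_isProbabilityMeasure_of_finite (by simp [hT]) (by simp)
  have integral_cond (ω : Ω) : ∫ s, B s ω ^ 2 / (4 * T) ∂volume[|Ioc 0 T] =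
      (∫ s in (0 : ℝ)..T, B s ω ^ 2) / (4 * T ^ 2) := by
    rw [ProbabilityTheory.cond, integral_smul_measure, integral_div,
      intervalIntegral.integral_of_le hT.le]
    simp only [volume_Ioc, sub_zero, ENNReal.toReal_inv, ENNReal.toReal_ofReal hT.le, smul_eq_mul]
    field_simp
  have hX : Measurable (Function.uncurry fun s ω => B s ω ^ 2 / (4 * T)) :=
    ((measurable_uncurry_of_continuous_of_measurable hB.cont hB.measurable).pow_const 2).div_const _
  have hint (ω : Ω) : Integrable (fun s => B s ω ^ 2 / (4 * T)) volume[|Ioc 0 T] := by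
    refine Integrable.smul_measure ?_ (by simp [hT])
    exact (((hB.cont ω).pow 2).div_const _).integrableOn_Ioc
  have hK : ∀ᵐ s ∂volume[|Ioc 0 T],
      ∫⁻ ω, ENNReal.ofReal (exp (B s ω ^ 2 / (4 * T))) ∂P ≤ ENNReal.ofReal √2 :=
    (ae_cond_mem measurableSet_Ioc).mono fun s hs => hB.lintegral_exp_mul_sq_le hs
  calc
    _ = P {ω | b / (4 * T ^ 2) ≤ ∫ s, B s ω ^ 2 / (4 * T) ∂volume[|Ioc 0 T]} := by
      simp only [integral_cond, div_le_div_iff_of_pos_right (show 0 < 4 * T ^ 2 by positivity)]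
    _ ≤ _ := measure_le_integral_le_of_lintegral_exp_le hX hint hK _
    _ = _ := by rw [← ENNReal.ofReal_mul (exp_pos _).le, mul_comm]

lemma hasIndepIncrements (hB : IsStdBM P B) :
    HasIndepIncrements (fun t : ℝ≥0 => B t) P :=
  fun n t ht => hB.indep n (fun i => t i) (fun i => (t i).2) (NNReal.coe_mono.comp ht)

end IsStdBM

namespace IsStdBMVec

variable {Ω : Type*} [MeasurableSpace Ω] {P : Measure Ω} {d : ℕ}
  {γ : ℝ → Ω → EuclideanSpace ℝ (Fin d)}

lemma cont (hγ : IsStdBMVec d P γ) (ω : Ω) : Continuous fun t => γ t ω :=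
  (PiLp.continuous_toLp 2 _).comp (continuous_pi fun i => (hγ.coord i).cont ω)

lemma measurable (hγ : IsStdBMVec d P γ) (t : ℝ) : Measurable (γ t) :=
  (WithLp.measurable_toLp 2 _).comp (measurable_pi_lambda _ fun i => (hγ.coord i).measurable t)

lemma start (hγ : IsStdBMVec d P γ) (ω : Ω) : γ 0 ω = 0 := by
  ext i
  exact (hγ.coord i).start ω

lemma measure_le_integral_norm_sq_le [NeZero d] (hγ : IsStdBMVec d P γ) {T : ℝ} (hT : 0 < T)
    (b : ℝ) :
    P {ω | b ≤ ∫ s in (0 : ℝ)..T, ‖γ s ω‖ ^ 2} ≤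
      ENNReal.ofReal (d * √2 * exp (-(b / (4 * d * T ^ 2)))) := by
  have hd : (0 : ℝ) < d := Nat.cast_pos.2 (NeZero.pos d)
  have integral_norm_sq (ω : Ω) : ∫ s in (0 : ℝ)..T, ‖γ s ω‖ ^ 2 =
      ∑ i, ∫ s in (0 : ℝ)..T, γ s ω i ^ 2 := by
    simp only [EuclideanSpace.real_norm_sq_eq]
    exact intervalIntegral.integral_finsetSum fun i _ =>
      (((hγ.coord i).cont ω).pow 2).intervalIntegrable 0 T
  calc
    _ ≤ P (⋃ i : Fin d, {ω | b / d ≤ ∫ s in (0 : ℝ)..T, γ s ω i ^ 2}) := by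
      refine measure_mono fun ω hω => mem_iUnion.2 ?_
      rw [mem_ofPred_eq, integral_norm_sq] at hω
      obtain ⟨i, -, hi⟩ := Finset.exists_le_of_sum_le (s := .univ) (f := fun _ : Fin d => b / d)
        Finset.univ_nonempty (by simpa [mul_div_cancel₀ _ hd.ne'] using hω)
      exact ⟨i, hi⟩
    _ ≤ ∑ _i : Fin d, ENNReal.ofReal (√2 * exp (-(b / d / (4 * T ^ 2)))) :=
      (measure_iUnion_fintype_le _ _).trans
        (Finset.sum_le_sum fun i _ => (hγ.coord i).measure_le_integral_sq_le hT _)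
    _ = _ := by
      rw [Finset.sum_const, Finset.card_univ, Fintype.card_fin, nsmul_eq_mul, mul_assoc,
        ENNReal.ofReal_mul hd.le, ENNReal.ofReal_natCast, div_div]
      ring_nf

lemma hasIndepIncrements (hγ : IsStdBMVec d P γ) : HasIndepIncrements (fun t : ℝ≥0 => γ t) P := by
  intro n t ht
  have hmeas (i : Fin d) (j : Fin n) :
      Measurable fun ω => γ (t j.succ) ω i - γ (t j.castSucc) ω i :=
    ((hγ.coord i).measurable _).sub ((hγ.coord i).measurable _)
  have hrows : iIndepFun (fun i ω (j : Fin n) => γ (t j.succ) ω i - γ (t j.castSucc) ω i) P :=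
    hγ.indepCoord.comp (fun _ w (j : Fin n) => w (t j.succ) - w (t j.castSucc)) fun _ => by fun_prop
  have hentries : iIndepFun
      (fun (p : Fin n × Fin d) ω => γ (t p.1.succ) ω p.2 - γ (t p.1.castSucc) ω p.2) P :=
    (iIndepFun_uncurry' hmeas hrows fun i => (hγ.coord i).hasIndepIncrements n t ht).precomp
      Prod.swap_injective
  exact (iIndepFun_curry (fun p => hmeas p.2 p.1) hentries).comp
    (fun _ => WithLp.toLp 2) fun _ => WithLp.measurable_toLp 2 _

lemma measure_forall_sub_mem (hγ : IsStdBMVec d P γ) {s t : ℝ} (hs : 0 ≤ s) (hst : s ≤ t)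
    {A : Fin d → Set ℝ} (hA : ∀ i, MeasurableSet (A i)) :
    P {ω | ∀ i, (γ t ω - γ s ω) i ∈ A i} = ∏ i, gaussianReal 0 (t - s).toNNReal (A i) := by
  have hindep : iIndepFun (fun i ω => γ t ω i - γ s ω i) P :=
    hγ.indepCoord.comp (fun _ w => w t - w s) fun _ => by fun_prop
  calc
    _ = P (⋂ i ∈ Finset.univ, (fun ω => γ t ω i - γ s ω i) ⁻¹' A i) := by
      congr 1
      ext ω
      simp
    _ = ∏ i, P ((fun ω => γ t ω i - γ s ω i) ⁻¹' A i) :=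
      hindep.measure_inter_preimage_eq_mul .univ fun i _ => hA i
    _ = _ := by
      refine Finset.prod_congr rfl fun i _ => ?_
      rw [← (hγ.coord i).gauss s t hs hst]
      exact (Measure.map_apply
        (((hγ.coord i).measurable t).sub ((hγ.coord i).measurable s)) (hA i)).symm

lemma ofReal_pow_le_measure_sub_mem_Icc (hγ : IsStdBMVec d P γ) {a s δ : ℝ} (hs : 0 ≤ s)
    (hδ : 0 < δ) (hδ' : 2 * π * δ ≤ 1) {y : Fin d → ℝ}
    (hy : ∀ i, y i ∈ Icc (-(2 * a)) (3 / 2 * a)) :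
    ENNReal.ofReal (a / 2 * exp (-(2 * a ^ 2 / δ))) ^ d ≤
      P {ω | ∀ i, (γ (s + δ) ω - γ s ω) i ∈ Icc (y i) (y i + a / 2)} := by
  rw [hγ.measure_forall_sub_mem hs (by linarith) fun i => measurableSet_Icc, add_sub_cancel_left]
  lift δ to ℝ≥0 using hδ.le
  calc
    _ = ∏ _i : Fin d, ENNReal.ofReal (a / 2 * exp (-(2 * a ^ 2 / δ))) := by simp
    _ ≤ _ := Finset.prod_le_prod' fun i _ => by
      rw [toNNReal_coe]
      exact ofReal_le_gaussianReal_Icc (NNReal.coe_pos.1 hδ).ne' hδ' (hy i)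

lemma ofReal_dropProbBound_le [NeZero d] (hγ : IsStdBMVec d P γ) {lam s δ : ℝ} (hlam : 0 ≤ lam)
    (hs : 0 ≤ s) (hδ : 0 < δ) (hδ' : 2 * π * δ ≤ 1) (x : EuclideanSpace ℝ (Fin d)) :
    ENNReal.ofReal (dropProbBound d lam δ) ≤
      P {ω | lam ≤ ‖x + (γ (s + δ) ω - γ s ω)‖ ^ 2 -
        ‖x + (γ (s + δ) ω - γ s ω) + (γ (s + δ + δ) ω - γ (s + δ) ω)‖ ^ 2} := by
  set a := √(2 * lam)
  have ha : 0 ≤ a := sqrt_nonneg _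
  have ha_sq : a ^ 2 = 2 * lam := sq_sqrt (by positivity)
  have ha_half : √(lam / 2) = a / 2 := by
    rw [sqrt_eq_iff_mul_self_eq (by positivity) (by positivity)]
    linarith [ha_sq]
  obtain ⟨y, z, hy, hz, hdrop⟩ := exists_forall_Icc_le_norm_sq_sub_norm_sq ha x
  have hindep : IndepFun (γ (s + δ) - γ s) (γ (s + δ + δ) - γ (s + δ)) P := by
    lift s to ℝ≥0 using hs
    lift δ to ℝ≥0 using hδ.le
    exact hγ.hasIndepIncrements.indepFun_sub_sub (r := s) (s := s + δ) (t := s + δ + δ)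
      (by simp) (by simp)
  let box (w : Fin d → ℝ) := {u : EuclideanSpace ℝ (Fin d) | ∀ i, u i ∈ Icc (w i) (w i + a / 2)}
  have measurable_box (w : Fin d → ℝ) : MeasurableSet (box w) := by
    simp only [box, ofPred_forall]
    exact .iInter fun i => (by fun_prop : Measurable fun u : EuclideanSpace ℝ (Fin d) => u i)
      measurableSet_Icc
  calc
    _ = ENNReal.ofReal (a / 2 * exp (-(2 * a ^ 2 / δ))) ^ d *
        ENNReal.ofReal (a / 2 * exp (-(2 * a ^ 2 / δ))) ^ d := by
      rw [dropProbBound, ha_half, ← pow_add, ← two_mul, ← ENNReal.ofReal_pow (by positivity), ha_sq]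
      ring_nf
    _ ≤ P ((γ (s + δ) - γ s) ⁻¹' box y) * P ((γ (s + δ + δ) - γ (s + δ)) ⁻¹' box z) := by
      gcongr
      · exact hγ.ofReal_pow_le_measure_sub_mem_Icc hs hδ hδ' hy
      · exact hγ.ofReal_pow_le_measure_sub_mem_Icc (by positivity) hδ hδ' hz
    _ = P ((γ (s + δ) - γ s) ⁻¹' box y ∩ (γ (s + δ + δ) - γ (s + δ)) ⁻¹' box z) :=
      (hindep.measure_inter_preimage_eq_mul _ _ (measurable_box y) (measurable_box z)).symm
    _ ≤ _ := by
      refine measure_mono fun ω hω => le_trans ?_ (hdrop _ _ hω.1 hω.2)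
      rw [ha_sq, mul_div_cancel_left₀ _ two_ne_zero]

lemma measure_norm_sq_sub_lt_le [NeZero d] (hγ : IsStdBMVec d P γ) {lam s δ : ℝ} (hlam : 0 ≤ lam)
    (hs : 0 ≤ s) (hδ : 0 < δ) (hδ' : 2 * π * δ ≤ 1) (x : EuclideanSpace ℝ (Fin d)) :
    P {ω | ‖x + (γ (s + δ) ω - γ s ω)‖ ^ 2 -
        ‖x + (γ (s + δ) ω - γ s ω) + (γ (s + δ + δ) ω - γ (s + δ) ω)‖ ^ 2 < lam} ≤
      ENNReal.ofReal (1 - dropProbBound d lam δ) := by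
  have := (hγ.coord 0).isProbabilityMeasure
  have hmeas := hγ.measurable
  rw [ENNReal.ofReal_sub _ (dropProbBound_nonneg d lam δ), ENNReal.ofReal_one]
  refine (measure_mono fun ω hω => ?_).trans (prob_compl_le_one_sub_of_le_prob
    (hγ.ofReal_dropProbBound_le hlam hs hδ hδ' x) (measurableSet_le (by fun_prop) (by fun_prop)))
  simpa using hω

lemma measure_forall_norm_sq_sub_lt_le_pow [NeZero d] (hγ : IsStdBMVec d P γ) {lam δ : ℝ}
    (hlam : 0 ≤ lam) (hδ : 0 < δ) (hδ' : 2 * π * δ ≤ 1) (n : ℕ) :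
    P {ω | ∀ k < n, ‖γ ((2 * k + 1) * δ) ω‖ ^ 2 - ‖γ ((2 * k + 2) * δ) ω‖ ^ 2 < lam} ≤
      ENNReal.ofReal (1 - dropProbBound d lam δ) ^ n := by
  lift δ to ℝ≥0 using hδ.le
  let ξ (k : ℕ) (ω : Ω) := γ ((k + 1 : ℕ) * δ) ω - γ (k * δ) ω
  have hξ (k : ℕ) : Measurable (ξ k) := (hγ.measurable _).sub (hγ.measurable _)
  have hindep : iIndepFun (fun k ω => (ξ (2 * k) ω, ξ (2 * k + 1) ω)) P :=
    iIndepFun_prodMk_two_mul hξ <| by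
      simpa [ξ] using hγ.hasIndepIncrements.nat (t := fun k => k * δ)
        fun k l hkl => by dsimp only; gcongr
  let E := {p : EuclideanSpace ℝ (Fin d) × _ × _ |
    ‖p.1 + p.2.1‖ ^ 2 - ‖p.1 + p.2.1 + p.2.2‖ ^ 2 < lam}
  have hE : MeasurableSet E := measurableSet_lt (by fun_prop) (by fun_prop)
  have hq (k : ℕ) (x : EuclideanSpace ℝ (Fin d)) :
      P {ω | (x, ξ (2 * k) ω, ξ (2 * k + 1) ω) ∈ E} ≤
        ENNReal.ofReal (1 - dropProbBound d lam δ) := by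
    simpa [E, ξ, add_mul] using
      hγ.measure_norm_sq_sub_lt_le hlam (by positivity : (0 : ℝ) ≤ 2 * k * δ) hδ hδ' x
  have hrec := measure_forall_lt_mem_le_pow (fun k => (hξ (2 * k)).prodMk (hξ (2 * k + 1))) hindep
    (f := fun p => p.1 + p.2.1 + p.2.2) (by fun_prop) (X := fun k => γ ((2 * k : ℕ) * δ)) (x₀ := 0)
    (fun ω => by simp [hγ.start])
    (fun k ω => by simp [ξ, mul_add, add_assoc, one_add_one_eq_two]) hE hq n
  refine (measure_mono fun ω hω k hk => ?_).trans hrec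
  simpa [E, ξ, add_assoc, one_add_one_eq_two] using hω k hk

lemma dropProbBound_le_one [NeZero d] (hγ : IsStdBMVec d P γ) {lam δ : ℝ} (hlam : 0 ≤ lam)
    (hδ : 0 < δ) (hδ' : 2 * π * δ ≤ 1) : dropProbBound d lam δ ≤ 1 := by
  have := (hγ.coord 0).isProbabilityMeasure
  exact ENNReal.ofReal_le_one.1 <|
    (hγ.ofReal_dropProbBound_le hlam le_rfl hδ hδ' 0).trans prob_le_one

lemma measure_le_integral_ddTime_sqBessel_le [NeZero d] (hγ : IsStdBMVec d P γ) {lam δ : ℝ}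
    (hlam : 0 ≤ lam) (hδ : 0 < δ) (hδ' : 2 * π * δ ≤ 1) {n : ℕ} (hn : n ≠ 0) (b : ℝ) :
    P {ω | b ≤ ∫ s in (0 : ℝ)..ddTime lam (sqBessel γ) ω, sqBessel γ s ω} ≤
      ENNReal.ofReal ((1 - dropProbBound d lam δ) ^ n +
        d * √2 * exp (-(b / (16 * d * δ ^ 2) / n ^ 2))) := by
  have hcont (ω : Ω) : Continuous fun t => sqBessel γ t ω := (hγ.cont ω).norm.pow 2
  have hT : 0 < 2 * n * δ := by positivity
  have hdrop : ∀ ω, (∃ k < n, lam ≤ sqBessel γ ((2 * k + 1) * δ) ω -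
      sqBessel γ ((2 * k + 2) * δ) ω) → ddTime lam (sqBessel γ) ω ≤ 2 * n * δ := by
    rintro ω ⟨k, hk, hle⟩
    have hkn : (k : ℝ) + 1 ≤ n := by exact_mod_cast hk
    calc
      _ ≤ (2 * k + 2) * δ := ddTime_le_of_le_sub (hcont ω) (by positivity) (by gcongr; simp) hle
      _ ≤ 2 * n * δ := by gcongr; linarith
  calc
    _ ≤ P ({ω | ∀ k < n, sqBessel γ ((2 * k + 1) * δ) ω - sqBessel γ ((2 * k + 2) * δ) ω < lam} ∪
        {ω | b ≤ ∫ s in (0 : ℝ)..2 * n * δ, sqBessel γ s ω}) := by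
      refine measure_mono fun ω (hω : b ≤ _) =>
        or_iff_not_imp_left.2 fun hno => (hω.trans ?_ : b ≤ _)
      refine intervalIntegral.integral_mono_interval le_rfl ddTime_nonneg (hdrop ω ?_)
        (.of_forall fun s => sq_nonneg _) ((hcont ω).intervalIntegrable _ _)
      simpa using hno
    _ ≤ ENNReal.ofReal (1 - dropProbBound d lam δ) ^ n +
        ENNReal.ofReal (d * √2 * exp (-(b / (4 * d * (2 * n * δ) ^ 2)))) :=
      (measure_union_le _ _).trans <| add_le_add
        (hγ.measure_forall_norm_sq_sub_lt_le_pow hlam hδ hδ' n)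
        (hγ.measure_le_integral_norm_sq_le hT b)
    _ = _ := by
      have hp := sub_nonneg.2 (hγ.dropProbBound_le_one hlam hδ hδ')
      rw [← ENNReal.ofReal_pow hp, ← ENNReal.ofReal_add (pow_nonneg hp n) (by positivity),
        div_div]
      ring_nf

end IsStdBMVec

theorem sqBessel4_time_integral_at_drawdown_time_tail_general
    {Ω : Type*} [MeasurableSpace Ω] {P : Measure Ω} {d : ℕ} [NeZero d]
    {γ : ℝ → Ω → EuclideanSpace ℝ (Fin d)} (hγ : IsStdBMVec d P γ) {lam b₀ : ℝ} (hlam : 0 < lam)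
    (hb₀ : 0 < b₀) :
    ∃ c : ℝ, 0 < c ∧ ∀ b : ℝ, b₀ ≤ b →
      P {ω | b ≤ ∫ s in (0 : ℝ)..ddTime lam (sqBessel γ) ω, sqBessel γ s ω} ≤
        ENNReal.ofReal (exp (-c * b ^ (1 / 3 : ℝ))) := by
  obtain ⟨δ, hδ, hδ', hδ_drop⟩ := exists_mul_exp_lt_dropProbBound (d := d) hlam hb₀ (d * √2)
  have hd : (0 : ℝ) < d := Nat.cast_pos.2 (NeZero.pos d)
  obtain ⟨c, hc, hbound⟩ := exists_pow_add_mul_exp_le_exp_neg_rpow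
    (q := 1 - dropProbBound d lam δ) (C := d * √2) (κ := (16 * d * δ ^ 2)⁻¹) (b₀ := b₀)
    (sub_nonneg.2 (hγ.dropProbBound_le_one hlam.le hδ hδ')) (by positivity) (by positivity) hb₀.le
    (by rw [← div_eq_inv_mul]; linarith)
  refine ⟨c, hc, fun b hb => ?_⟩
  obtain ⟨n, hn, hle⟩ := hbound b hb
  rw [← div_eq_inv_mul] at hle
  exact (hγ.measure_le_integral_ddTime_sqBessel_le hlam.le hδ hδ' hn b).trans
    (ENNReal.ofReal_le_ofReal hle)

/-- there is `c > 0` such that `P{A(τ₁) ≥ b} ≤ exp(-c b^{1/5})` for all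
`b ≥ 4`, where `A(t) := ∫₀^t U(s) ds` and `τ₁` is the unit drawdown time of the squared
four-dimensional Bessel process `U` started at `0`. -/
theorem sqBessel4_time_integral_at_drawdown_time_tail
    {Ω : Type*} [MeasurableSpace Ω] (P : Measure Ω) [IsProbabilityMeasure P]
    (γ : ℝ → Ω → EuclideanSpace ℝ (Fin 4)) (hγ : IsStdBMVec 4 P γ) :
    ∃ c : ℝ, 0 < c ∧ ∀ b : ℝ, 4 ≤ b →
      P {ω | b ≤ ∫ s in (0:ℝ)..(ddTime 1 (sqBessel4 γ) ω), sqBessel4 γ s ω}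
        ≤ ENNReal.ofReal (Real.exp (-c * b ^ ((1:ℝ)/5))) := by
  obtain ⟨c, hc, hbound⟩ :=
    sqBessel4_time_integral_at_drawdown_time_tail_general hγ one_pos four_pos
  refine ⟨c, hc, fun b hb => (hbound b hb).trans ?_⟩
  have hpow : b ^ ((1:ℝ)/5) ≤ b ^ (1 / 3 : ℝ) :=
    rpow_le_rpow_of_exponent_le (by linarith) (by norm_num)
  exact ENNReal.ofReal_le_ofReal (exp_le_exp.2 (by nlinarith))
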